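/- Let u : ℤ → ℝ and let 0 ≤ λ ≤ √3 − 1. Define D⁺u_j = u_{j+1} − u_j and D²u_j = u_{j+1} − 2u_j + u_{j−1}, and apply the unique two-stage fourth-order two-derivative method to the linear advection equation with upwind first derivative and centered second difference: u*_j = u_j + (λ/2)·D⁺u_j + (λ²/8)·D²u_j, and u'_j = u_j + λ·D⁺u_j + (λ²/6)·(D²u_j + 2·D²u*_j). Then ‖u'‖_TV ≤ ‖u‖_TV, i.e., the fully discrete scheme is total variation diminishing for λ ≤ √3 − 1. -/

import Mathlib

/-!
Eliminating the intermediate stage writes one step as a five-point stencil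
`u' j = ∑ k, w k • u (j + k)`, `-2 ≤ k ≤ 2`, with weights summing to `1`. Total variation is
subadditive and translation invariant, so a stencil scales it by at most `∑ k, |w k|`, which is `1`
once all weights are nonnegative. The binding weight is the central one,
`w 0 = (2 - λ²) (2 - 2 λ - λ²) / 4`, whose second factor vanishes at `λ = √3 - 1`.
-/

/-- The linear scheme with stencil `s` and weights `w`: the new value at `j` is the combination of
the values `u (j + k)`, `k ∈ s`, with weights `w k`. -/
def applyStencil {R M : Type*} [Semiring R] [AddCommMonoid M] [Module R M] (s : Finset ℤ)
    (w : ℤ → R) (u : ℤ → M) (j : ℤ) : M :=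
  ∑ k ∈ s, w k • u (j + k)

section TotalVariation

open scoped fwdDiff

variable {E : Type*} [SeminormedAddCommGroup E]

/-- The total variation of a doubly infinite sequence, the sum of the norms of its consecutive
differences. It takes values in `[0, ∞]`, so that no summability is required. -/
noncomputable def totalVariation (u : ℤ → E) : ENNReal :=
  ∑' j, ‖Δ_[1] u j‖ₑ

theorem totalVariation_comp_add_right (u : ℤ → E) (k : ℤ) :
    totalVariation (fun j ↦ u (j + k)) = totalVariation u := by
  simp only [totalVariation, fwdDiff_comp_add]
  exact (Equiv.addRight k).tsum_eq fun j ↦ ‖Δ_[1] u j‖ₑ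

theorem totalVariation_sum_le {ι : Type*} (s : Finset ι) (u : ι → ℤ → E) :
    totalVariation (∑ i ∈ s, u i) ≤ ∑ i ∈ s, totalVariation (u i) := by
  simp only [totalVariation]
  rw [← Summable.tsum_finsetSum fun _ _ ↦ ENNReal.summable]
  refine ENNReal.tsum_le_tsum fun j ↦ ?_
  rw [fwdDiff_finsetSum, Finset.sum_apply]
  simp only [enorm_eq_nnnorm]
  exact_mod_cast nnnorm_sum_le s fun i ↦ Δ_[1] (u i) j

section Stencil

variable {𝕜 : Type*} [SeminormedRing 𝕜] [Module 𝕜 E] [IsBoundedSMul 𝕜 E]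

theorem totalVariation_const_smul_le (c : 𝕜) (u : ℤ → E) :
    totalVariation (c • u) ≤ ‖c‖ₑ * totalVariation u := by
  simp only [totalVariation, fwdDiff_const_smul, Pi.smul_apply, ← ENNReal.tsum_mul_left]
  exact ENNReal.tsum_le_tsum fun j ↦ enorm_smul_le

theorem totalVariation_applyStencil_le (s : Finset ℤ) (w : ℤ → 𝕜) (u : ℤ → E) :
    totalVariation (applyStencil s w u) ≤ (∑ k ∈ s, ‖w k‖ₑ) * totalVariation u :=
  calc totalVariation (applyStencil s w u)
      = totalVariation (∑ k ∈ s, w k • fun j ↦ u (j + k)) := by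
        congr 1
        ext j
        simp only [applyStencil, Finset.sum_apply, Pi.smul_apply]
    _ ≤ ∑ k ∈ s, totalVariation (w k • fun j ↦ u (j + k)) := totalVariation_sum_le s _
    _ ≤ ∑ k ∈ s, ‖w k‖ₑ * totalVariation u := by
        gcongr with k
        exact (totalVariation_const_smul_le _ _).trans_eq
          (by rw [totalVariation_comp_add_right])
    _ = (∑ k ∈ s, ‖w k‖ₑ) * totalVariation u := (Finset.sum_mul ..).symm

end Stencil

theorem totalVariation_applyStencil_le_of_nonneg_of_sum_eq_one [NormedSpace ℝ E]
    {s : Finset ℤ} {w : ℤ → ℝ} (hw : ∀ k ∈ s, 0 ≤ w k) (hsum : ∑ k ∈ s, w k = 1) (u : ℤ → E) :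
    totalVariation (applyStencil s w u) ≤ totalVariation u := by
  have hnorm : ∑ k ∈ s, ‖w k‖ₑ = 1 := by
    rw [Finset.sum_congr rfl fun k hk ↦ Real.enorm_of_nonneg (hw k hk),
      ← ENNReal.ofReal_sum_of_nonneg hw, hsum, ENNReal.ofReal_one]
  simpa only [hnorm, one_mul] using totalVariation_applyStencil_le s w u

end TotalVariation

/-- The weight of `u (j + k)` in `u' j` once the intermediate stage of the two-stage fourth-order
method has been eliminated; `a` is the ratio `λ = Δt / Δx`. -/
noncomputable def twoStageWeight (a : ℝ) : ℤ → ℝ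
  | -2 => a ^ 4 / 24
  | -1 => a ^ 2 * (3 - a - a ^ 2) / 6
  | 0 => (2 - a ^ 2) * (2 - 2 * a - a ^ 2) / 4
  | 1 => a * (6 + 3 * a - 3 * a ^ 2 - a ^ 3) / 6
  | 2 => a ^ 3 * (4 + a) / 24
  | _ => 0

theorem sum_Icc_neg_two_two {M : Type*} [AddCommMonoid M] (f : ℤ → M) :
    ∑ k ∈ Finset.Icc (-2) 2, f k = f (-2) + (f (-1) + (f 0 + (f 1 + f 2))) := by
  rw [show Finset.Icc (-2 : ℤ) 2 = {-2, -1, 0, 1, 2} from rfl]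
  simp

theorem sum_twoStageWeight (a : ℝ) : ∑ k ∈ Finset.Icc (-2) 2, twoStageWeight a k = 1 := by
  simp only [sum_Icc_neg_two_two, twoStageWeight]
  ring

theorem twoStageWeight_nonneg {a : ℝ} (ha : 0 ≤ a) (ha' : a ^ 2 + 2 * a ≤ 2) (k : ℤ) :
    0 ≤ twoStageWeight a k := by
  have hcentral : 0 ≤ 2 - 2 * a - a ^ 2 := by linarith
  have hsq : 0 ≤ 2 - a ^ 2 := by linarith
  unfold twoStageWeight
  split
  · positivity
  · have : 0 ≤ 3 - a - a ^ 2 := by linarith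
    positivity
  · positivity
  · have : 6 + 3 * a - 3 * a ^ 2 - a ^ 3 = 4 + 3 * a + (1 + a) * (2 - 2 * a - a ^ 2) := by ring
    rw [this]
    positivity
  · positivity
  · rfl

theorem two_stage_fourth_order_tvd_general {E : Type*} [SeminormedAddCommGroup E]
    [NormedSpace ℝ E] (u ustar u' : ℤ → E) (lam : ℝ)
    (h0 : 0 ≤ lam) (h1 : lam ≤ Real.sqrt 3 - 1)
    (hstar : ∀ j : ℤ, ustar j = u j + (lam / 2) • (u (j + 1) - u j)
      + (lam ^ 2 / 8) • (u (j + 1) - (2 : ℝ) • u j + u (j - 1)))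
    (hu' : ∀ j : ℤ, u' j = u j + lam • (u (j + 1) - u j)
      + (lam ^ 2 / 6) • ((u (j + 1) - (2 : ℝ) • u j + u (j - 1))
        + (2 : ℝ) • (ustar (j + 1) - (2 : ℝ) • ustar j + ustar (j - 1)))) :
    totalVariation u' ≤ totalVariation u := by
  have hlam : lam ^ 2 + 2 * lam ≤ 2 := by
    have : (lam + 1) ^ 2 ≤ 3 := (Real.le_sqrt' (by linarith)).1 (by linarith)
    linarith
  have hstencil : u' = applyStencil (Finset.Icc (-2) 2) (twoStageWeight lam) u := by
    ext j
    simp only [applyStencil, sum_Icc_neg_two_two, twoStageWeight, hu', hstar]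
    rw [show j + 1 + 1 = j + 2 by ring, show j - 1 - 1 = j + -2 by ring, sub_add_cancel,
      add_sub_cancel_right, sub_eq_add_neg j 1, add_zero]
    module
  rw [hstencil]
  exact totalVariation_applyStencil_le_of_nonneg_of_sum_eq_one
    (fun k _ ↦ twoStageWeight_nonneg h0 hlam k) (sum_twoStageWeight lam) u

/-- The unique two-stage fourth-order two-derivative method applied
to linear advection with upwind first derivative and centered second difference is
total variation diminishing for `0 ≤ λ ≤ √3 − 1`. -/
theorem two_stage_fourth_order_tvd (u ustar u' : ℤ → ℝ) (lam : ℝ)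
    (h0 : 0 ≤ lam) (h1 : lam ≤ Real.sqrt 3 - 1)
    (hstar : ∀ j : ℤ, ustar j = u j + (lam / 2) * (u (j + 1) - u j)
      + (lam ^ 2 / 8) * (u (j + 1) - 2 * u j + u (j - 1)))
    (hu' : ∀ j : ℤ, u' j = u j + lam * (u (j + 1) - u j)
      + (lam ^ 2 / 6) * ((u (j + 1) - 2 * u j + u (j - 1))
        + 2 * (ustar (j + 1) - 2 * ustar j + ustar (j - 1)))) :
    (∑' j : ℤ, ENNReal.ofReal |u' (j + 1) - u' j|) ≤
      ∑' j : ℤ, ENNReal.ofReal |u (j + 1) - u j| := by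
  simpa only [totalVariation, fwdDiff, Real.enorm_eq_ofReal_abs] using
    two_stage_fourth_order_tvd_general u ustar u' lam h0 h1 hstar hu'
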